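/- arXiv:1304.7973 — 2 statements merged into one kernel-verified Lean document; each statement's English description precedes it below -/
import Mathlib

section
/- Let G(θ) = (∂C/∂θ_1(θ), …, ∂C/∂θ_p(θ)) be the gradient of the Bingham normalising constant. Then on the set {θ ∈ ℝ^p : θ_i ≠ θ_j for all i ≠ j}, G satisfies the Pfaffian system: for i ≠ j, ∂G_j/∂θ_i = (G_i − G_j)/(2(θ_i − θ_j)), and for each i, ∂G_i/∂θ_i = G_i − ∑_{k ≠ i} (G_i − G_k)/(2(θ_i − θ_k)), where the sum runs over k ∈ {1,…,p} \ {i}. -/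
open MeasureTheory

/-- The normalising constant of the Bingham distribution. -/
noncomputable def binghamC (p : ℕ) (θ : Fin p → ℝ) : ℝ :=
  ∫ x in {x : EuclideanSpace ℝ (Fin p) | ‖x‖ = 1},
    Real.exp (∑ i, θ i * x i ^ 2) ∂ μH[(p : ℝ) - 1]

section ParametricIntegral

variable {X : Type*} [TopologicalSpace X] [MeasurableSpace X] [OpensMeasurableSpace X]
  {μ : Measure X} {K : Set X}

/-- A continuous function is integrable on a compact set of finite measure. -/
theorem integrableOn_compact_of_continuous [SecondCountableTopology X]
    {E : Type*} [NormedAddCommGroup E]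
    (hK : IsCompact K) (hKm : MeasurableSet K) (hμ : μ K < ⊤) {f : X → E} (hf : Continuous f) :
    IntegrableOn f K μ := by
  obtain ⟨M, hM⟩ := hK.exists_bound_of_continuousOn hf.continuousOn
  exact Measure.integrableOn_of_bounded hμ.ne hf.aestronglyMeasurable
    ((ae_restrict_iff' hKm).2 (ae_of_all _ hM))

/-- Differentiation under the integral sign over a compact set of finite measure. -/
theorem hasFDerivAt_setIntegral_of_continuous [SecondCountableTopology X]
    {V : Type*} [NormedAddCommGroup V] [NormedSpace ℝ V] [ProperSpace V]
    (hK : IsCompact K) (hKm : MeasurableSet K) (hμ : μ K < ⊤)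
    {F : V → X → ℝ} {F' : V → X → V →L[ℝ] ℝ} (hF : ∀ v, Continuous (F v))
    (hF' : Continuous fun q : V × X => F' q.1 q.2)
    (hd : ∀ v x, HasFDerivAt (fun v => F v x) (F' v x) v) (v₀ : V) :
    HasFDerivAt (fun v => ∫ x in K, F v x ∂μ) (∫ x in K, F' v₀ x ∂μ) v₀ := by
  obtain ⟨M, hM⟩ := ((isCompact_closedBall v₀ 1).prod hK).exists_bound_of_continuousOn
    hF'.continuousOn
  refine hasFDerivAt_integral_of_dominated_of_fderiv_le (bound := fun _ => M)
    (Metric.closedBall_mem_nhds v₀ one_pos)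
    (Filter.Eventually.of_forall fun v => (hF v).aestronglyMeasurable)
    (integrableOn_compact_of_continuous hK hKm hμ (hF v₀))
    (hF'.comp (Continuous.prodMk_right v₀)).aestronglyMeasurable
    ((ae_restrict_iff' hKm).2 (ae_of_all _ fun x hx v hv => hM (v, x) ⟨hv, hx⟩))
    (integrableOn_const hμ.ne) (ae_of_all _ fun x v _ => hd v x)

end ParametricIntegral

section PlaneRotation

variable {p : ℕ} {i j : Fin p}

/-- Rotation by the angle `t` in the plane of the coordinates `i` and `j`. -/
noncomputable def planeRotationMap (i j : Fin p) (t : ℝ) :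
    EuclideanSpace ℝ (Fin p) →ₗ[ℝ] EuclideanSpace ℝ (Fin p) where
  toFun x := WithLp.toLp 2 fun k =>
    if k = i then Real.cos t * x i - Real.sin t * x j
    else if k = j then Real.sin t * x i + Real.cos t * x j else x k
  map_add' x y := by
    ext k
    simp only [PiLp.add_apply]
    split_ifs <;> ring
  map_smul' c x := by
    ext k
    simp only [PiLp.smul_apply, smul_eq_mul, RingHom.id_apply]
    split_ifs <;> ring

theorem planeRotationMap_apply_left (t : ℝ) (x : EuclideanSpace ℝ (Fin p)) :
    planeRotationMap i j t x i = Real.cos t * x i - Real.sin t * x j := by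
  simp [planeRotationMap]

theorem planeRotationMap_apply_right (hij : i ≠ j) (t : ℝ) (x : EuclideanSpace ℝ (Fin p)) :
    planeRotationMap i j t x j = Real.sin t * x i + Real.cos t * x j := by
  simp [planeRotationMap, hij.symm]

theorem sum_mul_planeRotationMap_sq (hij : i ≠ j) (c : Fin p → ℝ) (t : ℝ)
    (x : EuclideanSpace ℝ (Fin p)) :
    ∑ k, c k * planeRotationMap i j t x k ^ 2 =
      ∑ k, c k * x k ^ 2 + c i * ((Real.cos t * x i - Real.sin t * x j) ^ 2 - x i ^ 2)
        + c j * ((Real.sin t * x i + Real.cos t * x j) ^ 2 - x j ^ 2) := by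
  have h : ∀ k, c k * planeRotationMap i j t x k ^ 2 = c k * x k ^ 2
      + (if k = i then c i * ((Real.cos t * x i - Real.sin t * x j) ^ 2 - x i ^ 2) else 0)
      + (if k = j then c j * ((Real.sin t * x i + Real.cos t * x j) ^ 2 - x j ^ 2) else 0) := by
    intro k
    by_cases hi : k = i
    · subst hi
      rw [planeRotationMap_apply_left, if_pos rfl, if_neg hij]
      ring
    · by_cases hj : k = j
      · subst hj
        rw [planeRotationMap_apply_right hij, if_pos rfl, if_neg hi]
        ring
      · simp [planeRotationMap, hi, hj]
  simp [h, Finset.sum_add_distrib]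

/-- The rotation in a coordinate plane as a linear isometry. -/
noncomputable def planeRotation (hij : i ≠ j) (t : ℝ) :
    EuclideanSpace ℝ (Fin p) ≃ₗᵢ[ℝ] EuclideanSpace ℝ (Fin p) :=
  LinearIsometry.toLinearIsometryEquiv
    { toLinearMap := planeRotationMap i j t
      norm_map' := fun x => by
        rw [EuclideanSpace.norm_eq, EuclideanSpace.norm_eq]
        congr 1
        have h := sum_mul_planeRotationMap_sq hij (fun _ => 1) t x
        simp only [one_mul] at h
        simp only [Real.norm_eq_abs, sq_abs]
        rw [h]
        linear_combination (x i ^ 2 + x j ^ 2) * Real.sin_sq_add_cos_sq t } rfl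

theorem planeRotation_apply (hij : i ≠ j) (t : ℝ) (x : EuclideanSpace ℝ (Fin p)) :
    planeRotation hij t x = planeRotationMap i j t x := rfl

end PlaneRotation

section Bingham

variable {p : ℕ}

theorem setIntegral_sphere_comp_linearIsometryEquiv
    (R : EuclideanSpace ℝ (Fin p) ≃ₗᵢ[ℝ] EuclideanSpace ℝ (Fin p)) (d : ℝ)
    (f : EuclideanSpace ℝ (Fin p) → ℝ) :
    ∫ x in {x : EuclideanSpace ℝ (Fin p) | ‖x‖ = 1}, f (R x) ∂ μH[d] =
      ∫ x in {x : EuclideanSpace ℝ (Fin p) | ‖x‖ = 1}, f x ∂ μH[d] := by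
  have h := (R.toIsometryEquiv.measurePreserving_hausdorffMeasure d).setIntegral_preimage_emb
    R.toHomeomorph.measurableEmbedding f {x | ‖x‖ = 1}
  simpa using h

theorem isCompact_setOf_norm_eq_one :
    IsCompact {x : EuclideanSpace ℝ (Fin p) | ‖x‖ = 1} := by
  have h := isCompact_sphere (0 : EuclideanSpace ℝ (Fin p)) 1
  rwa [show Metric.sphere (0 : EuclideanSpace ℝ (Fin p)) 1 = {x | ‖x‖ = 1} by ext; simp] at h

/-- The unnormalised moment of `g` under the Bingham distribution with parameter `θ`. -/
noncomputable def binghamMoment (g : EuclideanSpace ℝ (Fin p) → ℝ) (θ : Fin p → ℝ) : ℝ :=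
  ∫ x in {x : EuclideanSpace ℝ (Fin p) | ‖x‖ = 1},
    g x * Real.exp (∑ i, θ i * x i ^ 2) ∂ μH[(p : ℝ) - 1]

theorem binghamC_eq_binghamMoment : binghamC p = binghamMoment fun _ => 1 := by
  ext θ
  simp [binghamC, binghamMoment]

theorem binghamC_eq_zero_of_measure_eq_top
    (hμ : μH[(p : ℝ) - 1] {x : EuclideanSpace ℝ (Fin p) | ‖x‖ = 1} = ⊤) :
    binghamC p = 0 := by
  ext θ
  refine integral_undef fun hint => ?_
  obtain ⟨M, hM⟩ := (isCompact_setOf_norm_eq_one (p := p)).exists_bound_of_continuousOn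
    (f := fun x => Real.exp (-∑ i, θ i * x i ^ 2)) (by fun_prop)
  have h1 : IntegrableOn (fun _ => (1 : ℝ)) {x : EuclideanSpace ℝ (Fin p) | ‖x‖ = 1}
      μH[(p : ℝ) - 1] := by
    refine (hint.const_mul M).mono' aestronglyMeasurable_const
      ((ae_restrict_iff' isCompact_setOf_norm_eq_one.measurableSet).2 (ae_of_all _ fun x hx => ?_))
    have h := mul_le_mul_of_nonneg_right ((le_abs_self _).trans (hM x hx))
      (Real.exp_pos (∑ i, θ i * x i ^ 2)).le
    simpa [← Real.exp_add] using h
  rw [integrableOn_const_iff] at h1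
  simp [hμ] at h1

variable (hμ : μH[(p : ℝ) - 1] {x : EuclideanSpace ℝ (Fin p) | ‖x‖ = 1} < ⊤)

include hμ

theorem integrableOn_binghamMoment {g : EuclideanSpace ℝ (Fin p) → ℝ} (hg : Continuous g)
    (θ : Fin p → ℝ) :
    IntegrableOn (fun x => g x * Real.exp (∑ i, θ i * x i ^ 2))
      {x : EuclideanSpace ℝ (Fin p) | ‖x‖ = 1} μH[(p : ℝ) - 1] :=
  integrableOn_compact_of_continuous isCompact_setOf_norm_eq_one
    isCompact_setOf_norm_eq_one.measurableSet hμ (by fun_prop)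

theorem fderiv_binghamMoment {g : EuclideanSpace ℝ (Fin p) → ℝ} (hg : Continuous g)
    (θ : Fin p → ℝ) (j : Fin p) :
    fderiv ℝ (binghamMoment g) θ (Pi.single j 1) = binghamMoment (fun x => g x * x j ^ 2) θ := by
  let L : EuclideanSpace ℝ (Fin p) → (Fin p → ℝ) →L[ℝ] ℝ := fun x =>
    ∑ i, (x i ^ 2) • ContinuousLinearMap.proj i
  have hL : Continuous L := by fun_prop
  have hF' : Continuous fun q : (Fin p → ℝ) × EuclideanSpace ℝ (Fin p) =>
      (g q.2 * Real.exp (∑ i, q.1 i * q.2 i ^ 2)) • L q.2 := by fun_prop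
  have h := hasFDerivAt_setIntegral_of_continuous isCompact_setOf_norm_eq_one
    isCompact_setOf_norm_eq_one.measurableSet hμ
    (F := fun θ x => g x * Real.exp (∑ i, θ i * x i ^ 2))
    (F' := fun θ x => (g x * Real.exp (∑ i, θ i * x i ^ 2)) • L x)
    (fun v => by fun_prop) hF' (fun v x => by
      have hlin : HasFDerivAt (fun v : Fin p → ℝ => ∑ i, v i * x i ^ 2) (L x) v :=
        HasFDerivAt.fun_sum fun i _ => (hasFDerivAt_apply i v).mul_const (x i ^ 2)
      simpa [smul_smul] using hlin.exp.const_mul (g x)) θ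
  have hint := integrableOn_compact_of_continuous isCompact_setOf_norm_eq_one
    isCompact_setOf_norm_eq_one.measurableSet hμ (hF'.comp (Continuous.prodMk_right θ))
  simp only [Function.comp_def] at hint
  change HasFDerivAt (binghamMoment g) _ θ at h
  rw [h.fderiv, ContinuousLinearMap.integral_apply hint]
  refine integral_congr_ae (ae_of_all _ fun x => ?_)
  simp [L, Pi.single_apply]
  ring

theorem fderiv_binghamC (θ : Fin p → ℝ) (j : Fin p) :
    fderiv ℝ (binghamC p) θ (Pi.single j 1) = binghamMoment (fun x => x j ^ 2) θ := by
  simp [binghamC_eq_binghamMoment, fderiv_binghamMoment hμ continuous_const]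

theorem fderiv_fderiv_binghamC (θ : Fin p → ℝ) (i j : Fin p) :
    fderiv ℝ (fun t => fderiv ℝ (binghamC p) t (Pi.single j 1)) θ (Pi.single i 1) =
      binghamMoment (fun x => x j ^ 2 * x i ^ 2) θ := by
  simp only [fderiv_binghamC hμ]
  exact fderiv_binghamMoment hμ (by fun_prop) θ i

/-- Rotation invariance, differentiated at the identity and tested on
`x i * x j * exp (∑ k, θ k * x k ^ 2)`. -/
theorem binghamMoment_rotation_identity {i j : Fin p} (hij : i ≠ j) (θ : Fin p → ℝ) :
    2 * (θ i - θ j) * binghamMoment (fun x => x j ^ 2 * x i ^ 2) θ =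
      binghamMoment (fun x => x i ^ 2) θ - binghamMoment (fun x => x j ^ 2) θ := by
  let a : ℝ → EuclideanSpace ℝ (Fin p) → ℝ := fun t x => Real.cos t * x i - Real.sin t * x j
  let b : ℝ → EuclideanSpace ℝ (Fin p) → ℝ := fun t x => Real.sin t * x i + Real.cos t * x j
  let w : ℝ → EuclideanSpace ℝ (Fin p) → ℝ := fun t x => Real.exp
    (∑ k, θ k * x k ^ 2 + θ i * (a t x ^ 2 - x i ^ 2) + θ j * (b t x ^ 2 - x j ^ 2))
  let D : ℝ → EuclideanSpace ℝ (Fin p) → ℝ := fun t x =>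
    (a t x ^ 2 - b t x ^ 2 + 2 * (θ j - θ i) * (a t x * b t x) ^ 2) * w t x
  have hF' : Continuous fun q : ℝ × EuclideanSpace ℝ (Fin p) =>
      ContinuousLinearMap.toSpanSingleton ℝ (D q.1 q.2) := by
    have hD : Continuous fun q : ℝ × EuclideanSpace ℝ (Fin p) => D q.1 q.2 := by fun_prop
    exact (ContinuousLinearMap.toSpanSingletonCLE (𝕜 := ℝ) (E := ℝ)).continuous.comp hD
  have h := hasFDerivAt_setIntegral_of_continuous isCompact_setOf_norm_eq_one
    isCompact_setOf_norm_eq_one.measurableSet hμ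
    (F := fun t x => a t x * b t x * w t x)
    (F' := fun t x => ContinuousLinearMap.toSpanSingleton ℝ (D t x))
    (fun v => by fun_prop) hF' (fun t x => by
      have ha : HasDerivAt (fun t => a t x) (-b t x) t := by
        refine (((Real.hasDerivAt_cos t).mul_const (x i)).fun_sub
          ((Real.hasDerivAt_sin t).mul_const (x j))).congr_deriv ?_
        ring
      have hb : HasDerivAt (fun t => b t x) (a t x) t := by
        refine (((Real.hasDerivAt_sin t).mul_const (x i)).fun_add
          ((Real.hasDerivAt_cos t).mul_const (x j))).congr_deriv ?_
        ring
      have hw : HasDerivAt (fun t => w t x)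
          (w t x * (θ i * (2 * a t x * -b t x) + θ j * (2 * b t x * a t x))) t := by
        refine (((((ha.fun_pow 2).sub_const (x i ^ 2)).const_mul (θ i)).const_add
          (∑ k, θ k * x k ^ 2)).fun_add
          (((hb.fun_pow 2).sub_const (x j ^ 2)).const_mul (θ j))).exp.congr_deriv ?_
        simp [w]
      have hD : HasDerivAt (fun t => a t x * b t x * w t x) (D t x) t := by
        refine ((ha.fun_mul hb).fun_mul hw).congr_deriv ?_
        ring
      exact hD.hasFDerivAt) 0
  have hconst : ∀ t, ∫ x in {x : EuclideanSpace ℝ (Fin p) | ‖x‖ = 1},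
      a t x * b t x * w t x ∂ μH[(p : ℝ) - 1] = binghamMoment (fun x => x i * x j) θ := by
    intro t
    rw [binghamMoment, ← setIntegral_sphere_comp_linearIsometryEquiv (planeRotation hij t) _
      (fun x => x i * x j * Real.exp (∑ k, θ k * x k ^ 2))]
    simp only [planeRotation_apply, sum_mul_planeRotationMap_sq hij,
      planeRotationMap_apply_left, planeRotationMap_apply_right hij, a, b, w]
  simp only [hconst] at h
  have hint := integrableOn_compact_of_continuous isCompact_setOf_norm_eq_one
    isCompact_setOf_norm_eq_one.measurableSet hμ (hF'.comp (Continuous.prodMk_right 0))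
  simp only [Function.comp_def] at hint
  have hzero := DFunLike.congr_fun (h.unique (hasFDerivAt_const _ _)) 1
  rw [ContinuousLinearMap.integral_apply hint] at hzero
  have hi := integrableOn_binghamMoment hμ (g := fun x => x i ^ 2) (by fun_prop) θ
  have hj := integrableOn_binghamMoment hμ (g := fun x => x j ^ 2) (by fun_prop) θ
  have hji := integrableOn_binghamMoment hμ (g := fun x => x j ^ 2 * x i ^ 2) (by fun_prop) θ
  have hsum := integral_add (hi.sub hj) (hji.const_mul (2 * (θ j - θ i)))
  rw [integral_const_mul] at hsum
  simp only [Pi.sub_apply] at hsum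
  rw [integral_sub hi hj] at hsum
  have hexp : ∀ x, ContinuousLinearMap.toSpanSingleton ℝ (D 0 x) 1 =
      x i ^ 2 * Real.exp (∑ k, θ k * x k ^ 2) - x j ^ 2 * Real.exp (∑ k, θ k * x k ^ 2)
        + 2 * (θ j - θ i) * (x j ^ 2 * x i ^ 2 * Real.exp (∑ k, θ k * x k ^ 2)) := by
    intro x
    simp [D, a, b, w]
    ring
  simp only [hexp] at hzero
  rw [hsum] at hzero
  simp only [binghamMoment]
  simp only [zero_apply] at hzero
  linear_combination -hzero

theorem sum_binghamMoment_mul_sq (θ : Fin p → ℝ) {g : EuclideanSpace ℝ (Fin p) → ℝ}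
    (hg : Continuous g) :
    ∑ k, binghamMoment (fun x => g x * x k ^ 2) θ = binghamMoment g θ := by
  simp only [binghamMoment]
  rw [← integral_finsetSum _ fun k _ => integrableOn_binghamMoment hμ (by fun_prop) θ]
  refine setIntegral_congr_fun isCompact_setOf_norm_eq_one.measurableSet fun x hx => ?_
  have h1 : ∑ k, x k ^ 2 = 1 := by
    rw [← EuclideanSpace.real_norm_sq_eq, show ‖x‖ = 1 from hx, one_pow]
  simp only [← Finset.sum_mul, ← Finset.mul_sum, h1, mul_one]

end Bingham

/-- The Pfaffian system for the gradient `G = (∂₁C,…,∂_pC)` of the Bingham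
normalising constant, on the set of parameters with pairwise distinct entries:
for `i ≠ j`, `∂_i G_j = (G_i − G_j)/(2(θ_i − θ_j))`, and
`∂_i G_i = G_i − ∑_{k ≠ i} (G_i − G_k)/(2(θ_i − θ_k))`. -/
theorem bingham_pfaffian (p : ℕ) (hp : 2 ≤ p) (θ : Fin p → ℝ)
    (hθ : ∀ i j : Fin p, i ≠ j → θ i ≠ θ j) :
    (∀ i j : Fin p, i ≠ j →
      fderiv ℝ (fun t => fderiv ℝ (binghamC p) t (Pi.single j 1)) θ (Pi.single i 1)
        = (fderiv ℝ (binghamC p) θ (Pi.single i 1)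
            - fderiv ℝ (binghamC p) θ (Pi.single j 1)) / (2 * (θ i - θ j)))
    ∧ (∀ i : Fin p,
      fderiv ℝ (fun t => fderiv ℝ (binghamC p) t (Pi.single i 1)) θ (Pi.single i 1)
        = fderiv ℝ (binghamC p) θ (Pi.single i 1)
          - ∑ k ∈ Finset.univ.erase i,
              (fderiv ℝ (binghamC p) θ (Pi.single i 1)
                - fderiv ℝ (binghamC p) θ (Pi.single k 1)) / (2 * (θ i - θ k))) := by
  rcases eq_or_ne (μH[(p : ℝ) - 1] {x : EuclideanSpace ℝ (Fin p) | ‖x‖ = 1}) ⊤ with hμ | hμ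
  · simp [binghamC_eq_zero_of_measure_eq_top hμ]
  replace hμ := hμ.lt_top
  have hmixed : ∀ i j : Fin p, i ≠ j → binghamMoment (fun x => x j ^ 2 * x i ^ 2) θ =
      (binghamMoment (fun x => x i ^ 2) θ - binghamMoment (fun x => x j ^ 2) θ) /
        (2 * (θ i - θ j)) := by
    intro i j hij
    rw [eq_div_iff (mul_ne_zero two_ne_zero (sub_ne_zero.2 (hθ i j hij))),
      ← binghamMoment_rotation_identity hμ hij θ, mul_comm]
  simp only [fderiv_fderiv_binghamC hμ]
  simp only [fderiv_binghamC hμ]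
  refine ⟨hmixed, fun i => ?_⟩
  have hsum := sum_binghamMoment_mul_sq hμ θ (g := fun x => x i ^ 2) (by fun_prop)
  rw [← Finset.add_sum_erase _ _ (Finset.mem_univ i)] at hsum
  rw [eq_sub_iff_add_eq]
  refine Eq.trans (congrArg _ (Finset.sum_congr rfl fun k hk => ?_)) hsum
  rw [← hmixed i k (Finset.ne_of_mem_erase hk).symm]
  simp only [mul_comm]
end

section
/- Let θ_1,…,θ_p < 0 and let x_1,…,x_p be independent centered Gaussian random variables with x_i ~ N(0, (−2θ_i)^{-1}). Then the random variable r = ∑_{i=1}^p x_i² has probability density function (with respect to Lebesgue measure on (0,∞)) given by f(r) = (r^{p/2−1} ∏_{k=1}^p √(−θ_k) / Γ(p/2)) · C(rθ)/C(0), where rθ = (rθ_1,…,rθ_p). Equivalently, the pushforward under x ↦ ‖x‖² of the product Gaussian measure with these variances has density f with respect to Lebesgue measure on (0,∞). -/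
open MeasureTheory

section RotationInvariant

variable {E : Type*} [NormedAddCommGroup E] [InnerProductSpace ℝ E] [MeasurableSpace E]
  [BorelSpace E]

/-- The characteristic function of a rotation-invariant measure is radial. -/
theorem charFun_eq_of_norm_eq {μ : Measure E} (hμ : ∀ e : E ≃ₗᵢ[ℝ] E, μ.map e = μ)
    {s t : E} (hst : ‖s‖ = ‖t‖) : charFun μ s = charFun μ t := by
  set e := (ℝ ∙ (s - t))ᗮ.reflection
  have he : e s = t := Submodule.reflection_sub hst
  have hemb : MeasurableEmbedding e := e.toHomeomorph.measurableEmbedding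
  conv_rhs => rw [← hμ e, charFun_apply, hemb.integral_map, ← he]
  rw [charFun_apply]
  refine integral_congr_ae (.of_forall fun x => ?_)
  simp [LinearIsometryEquiv.inner_map_map]

variable [CompleteSpace E] [SecondCountableTopology E]

/-- Two finite rotation-invariant measures carried by the unit sphere are proportional. -/
theorem smul_eq_smul_of_map_linearIsometryEquiv {μ ν : Measure E} [IsFiniteMeasure μ]
    [IsFiniteMeasure ν] (hμ : ∀ e : E ≃ₗᵢ[ℝ] E, μ.map e = μ)
    (hν : ∀ e : E ≃ₗᵢ[ℝ] E, ν.map e = ν) (hμ1 : ∀ᵐ x ∂μ, ‖x‖ = 1) (hν1 : ∀ᵐ x ∂ν, ‖x‖ = 1) :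
    measureUnivNNReal ν • μ = measureUnivNNReal μ • ν := by
  have average {ρ τ : Measure E} [IsFiniteMeasure τ] (hρ : ∀ e : E ≃ₗᵢ[ℝ] E, ρ.map e = ρ)
      (hτ1 : ∀ᵐ x ∂τ, ‖x‖ = 1) (t : E) :
      ∫ x, charFun ρ (‖t‖ • x) ∂τ = τ.real Set.univ • charFun ρ t := by
    rw [← integral_const]
    refine integral_congr_ae (hτ1.mono fun x hx => ?_)
    exact charFun_eq_of_norm_eq hρ (by simp [norm_smul, hx])
  refine Measure.ext_of_charFun (funext fun t => ?_)
  have hswap : ∫ x, charFun μ (‖t‖ • x) ∂ν = ∫ y, charFun ν (‖t‖ • y) ∂μ := by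
    simp only [charFun_apply]
    rw [integral_integral_swap]
    · refine integral_congr_ae (.of_forall fun y => integral_congr_ae (.of_forall fun x => ?_))
      simp only [inner_smul_right, real_inner_comm]
    · refine Integrable.of_bound (C := 1) ?_ (.of_forall fun z => ?_)
      · exact Continuous.aestronglyMeasurable (by fun_prop)
      · exact (Complex.norm_exp_ofReal_mul_I _).le
  rw [average hμ hν1, average hν hμ1] at hswap
  rw [charFun_apply, charFun_apply, integral_smul_nnreal_measure, integral_smul_nnreal_measure]
  exact hswap

end RotationInvariant

section Polar

open Set Metric

variable {E : Type*} [NormedAddCommGroup E] [NormedSpace ℝ E] [MeasurableSpace E]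
  [BorelSpace E] [FiniteDimensional ℝ E] (μ : Measure E) [μ.IsAddHaarMeasure]

/-- Integration in polar coordinates. -/
theorem lintegral_eq_lintegral_toSphere [Nontrivial E] {f : E → ENNReal} (hf : Measurable f) :
    ∫⁻ x, f x ∂μ = ∫⁻ r in Ioi (0 : ℝ), ∫⁻ u, ENNReal.ofReal (r ^ (Module.finrank ℝ E - 1)) *
      f (r • (u : E)) ∂μ.toSphere := by
  calc
    ∫⁻ x, f x ∂μ = ∫⁻ x : ({(0)}ᶜ : Set E), f x ∂(μ.comap (↑)) := by
      rw [lintegral_subtype_comap (measurableSet_singleton _).compl, restrict_compl_singleton]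
    _ = ∫⁻ z, f ((z.2 : ℝ) • (z.1 : E))
          ∂μ.toSphere.prod (.volumeIoiPow (Module.finrank ℝ E - 1)) := by
      rw [← (μ.measurePreserving_homeomorphUnitSphereProd).lintegral_comp_emb
        (Homeomorph.measurableEmbedding _)]
      refine lintegral_congr fun x => ?_
      have : ‖(x : E)‖ ≠ 0 := norm_ne_zero_iff.2 x.2
      simp [smul_smul, this]
    _ = _ := by
      have hg : Measurable fun r : Ioi (0 : ℝ) => ∫⁻ u, f ((r : ℝ) • (u : E)) ∂μ.toSphere :=
        Measurable.lintegral_prod_left (by fun_prop)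
      rw [lintegral_prod_symm' _ (by fun_prop), Measure.volumeIoiPow,
        lintegral_withDensity_eq_lintegral_mul _ (by fun_prop) hg,
        ← lintegral_subtype_comap measurableSet_Ioi]
      refine lintegral_congr fun r => ?_
      rw [Pi.mul_apply, lintegral_const_mul _ (by fun_prop)]

end Polar

open scoped Pointwise in
/-- The surface measure on the unit sphere is rotation invariant. -/
theorem map_coe_toSphere_linearIsometryEquiv {E : Type*} [NormedAddCommGroup E]
    [InnerProductSpace ℝ E] [FiniteDimensional ℝ E] [MeasurableSpace E] [BorelSpace E]
    (e : E ≃ₗᵢ[ℝ] E) :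
    (((volume : Measure E).toSphere.map (↑)).map e) = (volume : Measure E).toSphere.map (↑) := by
  ext s hs
  have hs' := e.continuous.measurable hs
  rw [Measure.map_apply e.continuous.measurable hs, Measure.map_apply measurable_subtype_coe hs',
    Measure.map_apply measurable_subtype_coe hs,
    Measure.toSphere_apply' _ (measurable_subtype_coe hs'),
    Measure.toSphere_apply' _ (measurable_subtype_coe hs)]
  rw [Subtype.image_preimage_coe, Subtype.image_preimage_coe]
  have : Set.Ioo (0 : ℝ) 1 • (Metric.sphere 0 1 ∩ e ⁻¹' s) =
      e ⁻¹' (Set.Ioo (0 : ℝ) 1 • (Metric.sphere 0 1 ∩ s)) := by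
    ext x
    simp only [Set.mem_smul, Set.mem_preimage]
    constructor
    · rintro ⟨r, hr, y, ⟨hy, hys⟩, rfl⟩
      exact ⟨r, hr, e y, ⟨by simpa using hy, hys⟩, by simp⟩
    · rintro ⟨r, hr, y, ⟨hy, hys⟩, hx⟩
      refine ⟨r, hr, e.symm y, ⟨by simpa using hy, by simpa using hys⟩, ?_⟩
      rw [← map_smul, hx, e.symm_apply_apply]
  rw [this, e.measurePreserving.measure_preimage_emb e.toHomeomorph.measurableEmbedding]

section HausdorffSphere

open Metric Set

/-- Radial projection onto the unit sphere is Lipschitz outside the open unit ball. -/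
theorem lipschitzOnWith_inv_norm_smul {E : Type*} [NormedAddCommGroup E] [NormedSpace ℝ E] :
    LipschitzOnWith 2 (fun x : E => ‖x‖⁻¹ • x) {x | 1 ≤ ‖x‖} := by
  refine LipschitzOnWith.of_dist_le_mul fun x (hx : 1 ≤ ‖x‖) y (hy : 1 ≤ ‖y‖) => ?_
  have hx0 : 0 < ‖x‖ := by linarith
  have hy0 : 0 < ‖y‖ := by linarith
  have hsplit : ‖x‖⁻¹ • x - ‖y‖⁻¹ • y = ‖x‖⁻¹ • (x - y) + (‖x‖⁻¹ * (‖y‖ - ‖x‖)) • ‖y‖⁻¹ • y := by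
    rw [smul_smul, smul_sub, mul_sub, inv_mul_cancel₀ hx0.ne', sub_mul, one_mul, sub_smul,
      mul_assoc, mul_inv_cancel₀ hy0.ne', mul_one]
    abel
  have h1 : ‖x‖⁻¹ ≤ 1 := inv_le_one_of_one_le₀ hx
  have h2 : |‖y‖ - ‖x‖| ≤ ‖x - y‖ := by
    rw [norm_sub_rev]; exact abs_norm_sub_norm_le y x
  have h3 : ‖‖y‖⁻¹ • y‖ = 1 := by
    rw [norm_smul, norm_inv, norm_norm, inv_mul_cancel₀ hy0.ne']
  rw [dist_eq_norm, dist_eq_norm, hsplit]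
  refine (norm_add_le _ _).trans ?_
  rw [norm_smul, norm_smul _ (‖y‖⁻¹ • y), h3, norm_mul, norm_inv, norm_norm, Real.norm_eq_abs]
  have h4 := mul_le_mul h1 h2 (abs_nonneg _) zero_le_one
  have h5 := mul_le_mul_of_nonneg_right h1 (norm_nonneg (x - y))
  push_cast
  linarith

theorem hausdorffMeasure_sphere_lt_top (n : ℕ) :
    μH[n] (sphere (0 : EuclideanSpace ℝ (Fin (n + 1))) 1) < ⊤ := by
  have hcube : (μH[n] : Measure (Fin n → ℝ)) (closedBall 0 1) < ⊤ := by
    have := hausdorffMeasure_pi_real (ι := Fin n)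
    rw [Fintype.card_fin] at this
    rw [this]
    exact measure_closedBall_lt_top
  let F (i : Fin (n + 1)) (c : ℝ) (y : Fin n → ℝ) : EuclideanSpace ℝ (Fin (n + 1)) :=
    WithLp.toLp 2 (i.insertNth c y)
  have hF (i : Fin (n + 1)) (c : ℝ) : ∃ K, LipschitzWith K (F i c) := by
    refine ⟨_, (PiLp.lipschitzWith_toLp 2 _).comp (LipschitzWith.mk_one (f :=
      fun y : Fin n → ℝ => (i.insertNth c y : Fin (n + 1) → ℝ)) fun x y => ?_)⟩
    refine (dist_pi_le_iff dist_nonneg).2 (i.forall_iff_succAbove.2 ⟨by simp, fun j => ?_⟩)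
    simpa using dist_le_pi_dist x y j
  let P (x : EuclideanSpace ℝ (Fin (n + 1))) := ‖x‖⁻¹ • x
  have hface (i : Fin (n + 1)) (c : ℝ) (hc : |c| = 1) :
      μH[n] ((P ∘ F i c) '' closedBall 0 1) < ⊤ := by
    obtain ⟨K, hK⟩ := hF i c
    have hmaps : MapsTo (F i c) (closedBall 0 1) {x | 1 ≤ ‖x‖} := fun y _ => by
      have := PiLp.norm_apply_le (F i c y) i
      simpa [F, hc] using this
    refine ((lipschitzOnWith_inv_norm_smul.comp hK.lipschitzOnWith hmaps
      ).hausdorffMeasure_image_le n.cast_nonneg).trans_lt ?_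
    exact ENNReal.mul_lt_top (by finiteness) hcube
  have hcover : sphere (0 : EuclideanSpace ℝ (Fin (n + 1))) 1 ⊆
      ⋃ i, ((P ∘ F i 1) '' closedBall 0 1 ∪ (P ∘ F i (-1)) '' closedBall 0 1) := by
    intro u hu
    have hu1 : ‖u‖ = 1 := by simpa using hu
    obtain ⟨i, hi⟩ := Finite.exists_max fun i => |u i|
    have hi0 : 0 < |u i| := by
      refine (abs_nonneg _).lt_of_ne fun h0 => ?_
      have : u = 0 := by
        ext j
        exact abs_nonpos_iff.1 ((hi j).trans h0.symm.le)
      simp [this] at hu1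
    have hy : (fun j => |u i|⁻¹ * u (i.succAbove j)) ∈ closedBall (0 : Fin n → ℝ) 1 := by
      rw [mem_closedBall_zero_iff, pi_norm_le_iff_of_nonneg zero_le_one]
      intro j
      rw [Real.norm_eq_abs, abs_mul, abs_inv, abs_abs, inv_mul_le_one₀ hi0]
      exact hi _
    have key (c : ℝ) (hc : |u i|⁻¹ * u i = c) :
        (P ∘ F i c) (fun j => |u i|⁻¹ * u (i.succAbove j)) = u := by
      have hFu : F i c (fun j => |u i|⁻¹ * u (i.succAbove j)) = |u i|⁻¹ • u := by
        ext j
        refine i.succAboveCases ?_ (fun j => ?_) j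
        · simp [F, hc]
        · simp [F]
      simp only [Function.comp_apply, hFu, P]
      rw [norm_smul, hu1, smul_smul]
      simp [hi0.ne']
    refine mem_iUnion.2 ⟨i, ?_⟩
    rcases abs_cases (u i) with ⟨h, _⟩ | ⟨h, _⟩
    · exact .inl ⟨_, hy, key 1 (by rw [h] at hi0 ⊢; exact inv_mul_cancel₀ hi0.ne')⟩
    · refine .inr ⟨_, hy, key (-1) ?_⟩
      rw [h] at hi0 ⊢
      field_simp [neg_ne_zero.1 hi0.ne']
  refine (measure_mono hcover).trans_lt ((measure_iUnion_fintype_le _ _).trans_lt ?_)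
  refine ENNReal.sum_lt_top.2 fun i _ => (measure_union_le _ _).trans_lt ?_
  exact ENNReal.add_lt_top.2 ⟨hface i 1 (by simp), hface i (-1) (by simp)⟩

theorem hausdorffMeasure_sphere_pos (n : ℕ) :
    0 < μH[n] (sphere (0 : EuclideanSpace ℝ (Fin (n + 1))) 1) := by
  let F (x : EuclideanSpace ℝ (Fin (n + 1))) (j : Fin n) : ℝ := x j.succ
  have hF : LipschitzWith 1 F := LipschitzWith.mk_one fun x y =>
    (dist_pi_le_iff dist_nonneg).2 fun j => by
      simpa [dist_eq_norm] using PiLp.norm_apply_le (x - y) j.succ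
  have himage : {y : Fin n → ℝ | ∑ j, y j ^ 2 < 1} ⊆ F '' sphere 0 1 := by
    intro y (hy : ∑ j, y j ^ 2 < 1)
    refine ⟨WithLp.toLp 2 (Fin.cons (√(1 - ∑ j, y j ^ 2)) y), ?_, by ext j; simp [F]⟩
    rw [mem_sphere_zero_iff_norm, EuclideanSpace.norm_eq, Fin.sum_univ_succ]
    simp [Real.sq_sqrt (sub_nonneg.2 hy.le)]
  have hopen : IsOpen {y : Fin n → ℝ | ∑ j, y j ^ 2 < 1} :=
    isOpen_lt (by fun_prop) continuous_const
  have hvol := hausdorffMeasure_pi_real (ι := Fin n)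
  rw [Fintype.card_fin] at hvol
  calc
    0 < volume {y : Fin n → ℝ | ∑ j, y j ^ 2 < 1} := hopen.measure_pos _ ⟨0, by simp⟩
    _ ≤ μH[n] (F '' sphere 0 1) := by rw [← hvol]; exact measure_mono himage
    _ ≤ μH[n] (sphere (0 : EuclideanSpace ℝ (Fin (n + 1))) 1) := by
      simpa using hF.hausdorffMeasure_image_le n.cast_nonneg (sphere 0 1)

end HausdorffSphere

/-- A product of measures with densities has the product of the densities as its density. -/
theorem pi_withDensity_ofReal {ι : Type*} [Fintype ι] {X : ι → Type*}
    {mX : ∀ i, MeasurableSpace (X i)} {μ : ∀ i, Measure (X i)} [∀ i, SigmaFinite (μ i)]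
    {f : ∀ i, X i → ℝ} (hf : ∀ i, Integrable (f i) (μ i)) (hf0 : ∀ i x, 0 ≤ f i x) :
    (Measure.pi fun i => (μ i).withDensity fun x => ENNReal.ofReal (f i x)) =
      (Measure.pi μ).withDensity fun x => ENNReal.ofReal (∏ i, f i (x i)) := by
  have (i : ι) : SigmaFinite ((μ i).withDensity fun x => ENNReal.ofReal (f i x)) :=
    SigmaFinite.withDensity_ofReal (f i)
  refine Measure.pi_eq fun s hs => ?_
  rw [withDensity_apply _ (.univ_pi hs), Measure.restrict_pi_pi,
    ← ofReal_integral_eq_lintegral_ofReal (Integrable.fintype_prod_dep fun i => (hf i).restrict)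
      (.of_forall fun x => Finset.prod_nonneg fun i _ => hf0 i _),
    integral_fintype_prod_eq_prod, ENNReal.ofReal_prod_of_nonneg
      fun i _ => integral_nonneg (hf0 i)]
  refine Finset.prod_congr rfl fun i _ => ?_
  rw [withDensity_apply _ (hs i), ofReal_integral_eq_lintegral_ofReal (hf i).restrict
    (.of_forall (hf0 i))]

theorem gaussianPDFReal_zero_inv_neg_two_mul {a : ℝ} (ha : a < 0) (x : ℝ) :
    ProbabilityTheory.gaussianPDFReal 0 ((-2 * a)⁻¹).toNNReal x =
      (√Real.pi)⁻¹ * √(-a) * Real.exp (a * x ^ 2) := by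
  have h2 : (0 : ℝ) < -2 * a := by linarith
  rw [ProbabilityTheory.gaussianPDFReal, Real.coe_toNNReal _ (inv_nonneg.2 h2.le)]
  have h1 : 2 * Real.pi * (-2 * a)⁻¹ = Real.pi / -a := by field_simp
  rw [h1, Real.sqrt_div Real.pi_nonneg, inv_div, div_eq_inv_mul]
  congr 2
  field_simp
  simp

/-- Product of centered Gaussians with variances `(-2 θ i)⁻¹`, by its density. -/
theorem pi_gaussianReal_zero_eq_withDensity {ι : Type*} [Fintype ι] {θ : ι → ℝ}
    (hθ : ∀ i, θ i < 0) :
    (Measure.pi fun i => ProbabilityTheory.gaussianReal 0 ((-2 * θ i)⁻¹).toNNReal) =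
      volume.withDensity fun x : ι → ℝ => ENNReal.ofReal ((√Real.pi)⁻¹ ^ Fintype.card ι *
        (∏ i, √(-θ i)) * Real.exp (∑ i, θ i * x i ^ 2)) := by
  have hv (i : ι) : ((-2 * θ i)⁻¹).toNNReal ≠ 0 := by simpa using hθ i
  simp_rw [ProbabilityTheory.gaussianReal_of_var_ne_zero _ (hv _)]
  unfold ProbabilityTheory.gaussianPDF
  rw [pi_withDensity_ofReal (fun i => ProbabilityTheory.integrable_gaussianPDFReal _ _)
    fun i => ProbabilityTheory.gaussianPDFReal_nonneg _ _, volume_pi]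
  simp_rw [gaussianPDFReal_zero_inv_neg_two_mul (hθ _), Finset.prod_mul_distrib, Real.exp_sum,
    Finset.prod_const, Finset.card_univ]

/-- The substitution `r ↦ r ^ 2` on the positive half-line. -/
theorem lintegral_Ioi_comp_sq (g : ℝ → ENNReal) :
    ∫⁻ r in Set.Ioi (0 : ℝ), ENNReal.ofReal (2 * r) * g (r ^ 2) = ∫⁻ r in Set.Ioi (0 : ℝ), g r := by
  have himage : (fun r : ℝ => r ^ 2) '' Set.Ioi 0 = Set.Ioi 0 := by
    ext y
    refine ⟨fun ⟨r, (hr : 0 < r), h⟩ => h ▸ pow_pos hr 2, fun (hy : 0 < y) => ?_⟩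
    exact ⟨√y, Real.sqrt_pos.2 hy, Real.sq_sqrt hy.le⟩
  conv_rhs => rw [← himage]
  rw [lintegral_image_eq_lintegral_abs_deriv_mul measurableSet_Ioi (f' := fun r => 2 * r)
    (fun x _ => by simpa using (hasDerivAt_pow 2 x).hasDerivWithinAt)
    fun x (hx : 0 < x) y (hy : 0 < y) h => (sq_eq_sq₀ hx.le hy.le).1 h]
  refine setLIntegral_congr_fun measurableSet_Ioi fun r (hr : 0 < r) => ?_
  simp only [abs_of_pos (show 0 < 2 * r by positivity)]

/-- The surface area of the unit sphere. -/
theorem toSphere_real_univ_euclideanSpace (n : ℕ) :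
    (volume : Measure (EuclideanSpace ℝ (Fin (n + 1)))).toSphere.real Set.univ =
      2 * √Real.pi ^ (n + 1) / Real.Gamma (((n + 1 : ℕ) : ℝ) / 2) := by
  have hpos : (0 : ℝ) < ((n + 1 : ℕ) : ℝ) / 2 := by positivity
  have hΓ := Real.Gamma_pos_of_pos hpos
  rw [Measure.toSphere_real_apply_univ, measureReal_def, EuclideanSpace.volume_ball,
    finrank_euclideanSpace, Fintype.card_fin, Real.Gamma_add_one hpos.ne', ENNReal.ofReal_one,
    one_pow, one_mul, ENNReal.toReal_ofReal (by positivity)]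
  field_simp


/-- The Bingham normalising constant, normalised by its value at zero, is an average with respect
to the surface measure induced by Lebesgue measure. -/
theorem binghamC_div_binghamC_zero (n : ℕ) (θ : Fin (n + 1) → ℝ) :
    binghamC (n + 1) θ / binghamC (n + 1) 0 =
      (∫ u, Real.exp (∑ i, θ i * (u : EuclideanSpace ℝ (Fin (n + 1))) i ^ 2)
        ∂(volume : Measure (EuclideanSpace ℝ (Fin (n + 1)))).toSphere) /
      (volume : Measure (EuclideanSpace ℝ (Fin (n + 1)))).toSphere.real Set.univ := by
  let E := EuclideanSpace ℝ (Fin (n + 1))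
  let S : Set E := Metric.sphere 0 1
  have hS : MeasurableSet S := Metric.isClosed_sphere.measurableSet
  let ν : Measure E := μH[n].restrict S
  have : Fact (μH[n] S < ⊤) := ⟨hausdorffMeasure_sphere_lt_top n⟩
  let σ : Measure E := (volume : Measure E).toSphere.map (↑)
  have hν (e : E ≃ₗᵢ[ℝ] E) : ν.map e = ν := by
    have hpre : e ⁻¹' S = S := by ext; simp [S]
    have hmap := e.toIsometryEquiv.map_hausdorffMeasure (n : ℝ)
    change (μH[n].restrict S).map e = _
    conv_lhs => rw [← hpre]
    rw [← Measure.restrict_map e.continuous.measurable hS]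
    exact congrArg (Measure.restrict · S) hmap
  have hν1 : ∀ᵐ x ∂ν, ‖x‖ = 1 := by
    filter_upwards [ae_restrict_mem hS] with x hx
    simpa [S] using hx
  have hσ1 : ∀ᵐ x ∂σ, ‖x‖ = 1 :=
    (MeasurableEmbedding.subtype_coe hS).ae_map_iff.2 (.of_forall fun u => by simp)
  have hprop := smul_eq_smul_of_map_linearIsometryEquiv map_coe_toSphere_linearIsometryEquiv hν
    hσ1 hν1
  have hC (η : Fin (n + 1) → ℝ) :
      binghamC (n + 1) η = ∫ x, Real.exp (∑ i, η i * x i ^ 2) ∂ν := by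
    have hset : {x : EuclideanSpace ℝ (Fin (n + 1)) | ‖x‖ = 1} = S := by ext; simp [S]
    rw [binghamC, hset, Nat.cast_succ, add_sub_cancel_right]
  have hC0 : binghamC (n + 1) 0 = ν.real Set.univ := by simp [hC]
  have hνpos : 0 < ν.real Set.univ := by
    rw [measureReal_restrict_apply_univ]
    exact ENNReal.toReal_pos (hausdorffMeasure_sphere_pos n).ne'
      (hausdorffMeasure_sphere_lt_top n).ne
  have hσuniv : σ.real Set.univ = (volume : Measure E).toSphere.real Set.univ := by
    rw [map_measureReal_apply measurable_subtype_coe .univ, Set.preimage_univ]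
  have hσpos : 0 < (volume : Measure E).toSphere.real Set.univ := by
    have hΓ : 0 < Real.Gamma (((n + 1 : ℕ) : ℝ) / 2) := Real.Gamma_pos_of_pos (by positivity)
    rw [toSphere_real_univ_euclideanSpace]
    positivity
  have h_int := congrArg (fun τ : Measure E => ∫ x, Real.exp (∑ i, θ i * x i ^ 2) ∂τ) hprop
  simp only [integral_smul_nnreal_measure] at h_int
  rw [(MeasurableEmbedding.subtype_coe hS).integral_map, ← hC] at h_int
  rw [hC0, div_eq_div_iff hνpos.ne' hσpos.ne', mul_comm, mul_comm _ (ν.real _)]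
  rw [← hσuniv]
  exact h_int.symm

/-- If `x_1,…,x_p` are independent with `x_i ~ N(0, (−2θ_i)⁻¹)` (all
`θ_i < 0`), then `r = ∑ x_i²` has density
`f(r) = (r^{p/2−1} ∏_k √(−θ_k)/Γ(p/2)) · C(rθ)/C(0)` with respect to Lebesgue
measure on `(0,∞)`: the pushforward of the product Gaussian measure under
`x ↦ ∑ x_i²` equals Lebesgue measure restricted to `(0,∞)` with density `f`. -/
theorem chi2_mixture_density (p : ℕ) (hp : 2 ≤ p)
    (θ : Fin p → ℝ) (hθ : ∀ i, θ i < 0) :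
    Measure.map (fun x : Fin p → ℝ => ∑ i, x i ^ 2)
        (Measure.pi fun i => ProbabilityTheory.gaussianReal 0 ((-2 * θ i)⁻¹).toNNReal)
      = (volume.restrict (Set.Ioi (0 : ℝ))).withDensity fun r =>
          ENNReal.ofReal
            ((r ^ ((p : ℝ) / 2 - 1) * ∏ k, Real.sqrt (-θ k)) / Real.Gamma ((p : ℝ) / 2)
              * (binghamC p (fun i => r * θ i) / binghamC p 0)) := by
  obtain ⟨n, rfl⟩ : ∃ n, p = n + 1 := ⟨p - 1, by lia⟩
  let σ := (volume : Measure (EuclideanSpace ℝ (Fin (n + 1)))).toSphere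
  let B (r : ℝ) : ℝ := ∫ u, Real.exp (r * ∑ i, θ i * (u : EuclideanSpace ℝ (Fin (n + 1))) i ^ 2) ∂σ
  have hBmeas : Measurable B := by
    refine StronglyMeasurable.measurable (StronglyMeasurable.integral_prod_right ?_)
    exact Continuous.stronglyMeasurable (by fun_prop)
  have hratio (r : ℝ) : binghamC (n + 1) (fun i => r * θ i) / binghamC (n + 1) 0 =
      B r / (2 * √Real.pi ^ (n + 1) / Real.Gamma (((n + 1 : ℕ) : ℝ) / 2)) := by
    rw [binghamC_div_binghamC_zero, toSphere_real_univ_euclideanSpace]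
    simp only [B, Finset.mul_sum, mul_assoc]
    rfl
  simp_rw [hratio]
  refine Measure.ext_of_lintegral _ fun g hg => ?_
  rw [lintegral_map hg (by fun_prop), pi_gaussianReal_zero_eq_withDensity hθ,
    lintegral_withDensity_eq_lintegral_mul _ (by fun_prop) (by fun_prop),
    lintegral_withDensity_eq_lintegral_mul _ (by fun_prop) hg,
    ← (EuclideanSpace.volume_preserving_symm_measurableEquiv_toLp (Fin (n + 1))).lintegral_comp
      (by fun_prop),
    lintegral_eq_lintegral_toSphere _ (by fun_prop)]
  refine Eq.trans ?_ (lintegral_Ioi_comp_sq _)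
  refine setLIntegral_congr_fun measurableSet_Ioi fun r (hr : 0 < r) => ?_
  have hu (u : Metric.sphere (0 : EuclideanSpace ℝ (Fin (n + 1))) 1) :
      ∑ i, (u : EuclideanSpace ℝ (Fin (n + 1))) i ^ 2 = 1 := by
    rw [← EuclideanSpace.real_norm_sq_eq]; simp
  have h_int : Integrable (fun u : Metric.sphere (0 : EuclideanSpace ℝ (Fin (n + 1))) 1 =>
      Real.exp (r ^ 2 * ∑ i, θ i * (u : EuclideanSpace ℝ (Fin (n + 1))) i ^ 2)) σ :=
    Continuous.integrable_of_hasCompactSupport (by fun_prop)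
      (HasCompactSupport.of_compactSpace _)
  set K := (√Real.pi)⁻¹ ^ (n + 1) * ∏ i, √(-θ i) with hK
  have hK0 : 0 ≤ K := by positivity
  calc
    _ = ∫⁻ u : Metric.sphere _ _, ENNReal.ofReal (r ^ n * K * Real.exp (r ^ 2 *
          ∑ i, θ i * (u : EuclideanSpace ℝ (Fin (n + 1))) i ^ 2)) * g (r ^ 2) ∂σ := by
      refine lintegral_congr fun u => ?_
      have hexp : ∑ i, θ i * (r * (u : EuclideanSpace ℝ (Fin (n + 1))) i) ^ 2 =
          r ^ 2 * ∑ i, θ i * (u : EuclideanSpace ℝ (Fin (n + 1))) i ^ 2 := by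
        rw [Finset.mul_sum]
        exact Finset.sum_congr rfl fun i _ => by ring
      have hsq : ∑ i, (r * (u : EuclideanSpace ℝ (Fin (n + 1))) i) ^ 2 = r ^ 2 := by
        simp_rw [mul_pow]
        rw [← Finset.mul_sum, hu, mul_one]
      simp only [Pi.mul_apply, MeasurableEquiv.coe_toLp_symm, PiLp.smul_apply, smul_eq_mul,
        finrank_euclideanSpace, Fintype.card_fin, add_tsub_cancel_right, hexp, hsq, ← hK]
      rw [← mul_assoc, ← ENNReal.ofReal_mul (by positivity), mul_assoc (r ^ n)]
    _ = ENNReal.ofReal (r ^ n * K * B (r ^ 2)) * g (r ^ 2) := by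
      rw [lintegral_mul_const _ (by fun_prop),
        ← ofReal_integral_eq_lintegral_ofReal (h_int.const_mul _)
          (.of_forall fun u => by positivity), integral_const_mul]
    _ = _ := by
      have hΓ : 0 < Real.Gamma (((n + 1 : ℕ) : ℝ) / 2) := Real.Gamma_pos_of_pos (by positivity)
      have hpow : (r ^ 2) ^ (((n + 1 : ℕ) : ℝ) / 2 - 1) * r = r ^ n := by
        rw [← Real.rpow_natCast_mul hr.le, ← Real.rpow_add_one hr.ne', ← Real.rpow_natCast]
        congr 1
        push_cast
        ring
      rw [Pi.mul_apply, ← mul_assoc (ENNReal.ofReal _), ← ENNReal.ofReal_mul (by positivity),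
        ← hpow, hK, inv_pow]
      congr 2
      field_simp
end
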